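/- (Weighted-average guarantee for Mirror Prox, constant stepsizes.) Suppose in addition that F is L-Lipschitz continuous on 𝒵 (with L > 0), i.e. ‖F(z) − F(z')‖_* ≤ L‖z − z'‖ for all z, z' ∈ 𝒵, where ‖·‖_* is the dual norm. Fix q ≥ 0 and take τ_t = 1/L and w_t = t^q for all t. Starting from z¹ ∈ 𝒵, for each t let z̃^t be the minimizer over w ∈ 𝒵 of ⟨τ_t F(z^t), w⟩ + D(w, z^t), let z^{t+1} be the minimizer over w ∈ 𝒵 of ⟨τ_t F(z̃^t), w⟩ + D(w, z^t), and set δ_t = τ_t⟨F(z̃^t), z̃^t − z^{t+1}⟩ − D(z^{t+1}, z^t). Then δ_t ≤ 0 for every t, and with S_T = Σ_{t=1}^T w_t τ_t and z̄^T = (x̄^T, ȳ^T) = (1/S_T) Σ_{t=1}^T w_t τ_t z̃^t, for every T ≥ 1 and every (x, y) ∈ 𝒳 × 𝒴: φ(x̄^T, y) − φ(x, ȳ^T) ≤ (q + 1)LΩ/T. -/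

import Mathlib

/-!
A mirror step from `c` in the direction `g` satisfies a three-point inequality: `g (u - p)` is at
most `D p c - D p u - D u c`. Applied to the extrapolation step with `p` the next iterate, it shows
that replacing `F (z t)` by `F (ztil t)` costs at most
`τ * L * ‖ztil t - z t‖ * ‖ztil t - z (t + 1)‖`, which strong convexity and AM-GM absorb in the two
negative Bregman terms when `τ * L ≤ 1`; this is `δ t ≤ 0`. Applied to the update step, it then
bounds the regret of step `t` by `D p (z t) - D p (z (t + 1))`. For nondecreasing weights these
differences telescope to at most `w T * Ω`. Convexity-concavity turns regret into the duality gap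
and Jensen's inequality passes to the averages. Finally `∑ t ^ q ≥ ∫ x ^ q = T ^ (q + 1) / (q + 1)`.
-/

open Filter Set Topology
open scoped NNReal

section Convexity

variable {E : Type*} [NormedAddCommGroup E] [NormedSpace ℝ E]
  {s : Set E} {f : E → ℝ} {f' : E →L[ℝ] ℝ} {a b : E}

theorem strongConvexOn_of_forall_segment {m : ℝ} (hs : Convex ℝ s)
    (hf : ∀ a ∈ s, ∀ b ∈ s, ∀ r : ℝ, 0 ≤ r → r ≤ 1 →
      f (r • a + (1 - r) • b) ≤ r * f a + (1 - r) * f b - m / 2 * r * (1 - r) * ‖a - b‖ ^ 2) :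
    StrongConvexOn s m f := by
  refine ⟨hs, fun a ha b hb r r' hr hr' hadd => ?_⟩
  obtain rfl : r' = 1 - r := eq_sub_of_add_eq' hadd
  have h := hf a ha b hb r hr (sub_nonneg.1 hr')
  simp only [smul_eq_mul]
  linarith

theorem apply_sub_add_le_of_uniformConvexOn {ρ : ℝ → ℝ} (hf : UniformConvexOn s ρ f)
    (hf' : HasFDerivWithinAt f f' s a) (ha : a ∈ s) (hb : b ∈ s) :
    f' (b - a) + ρ ‖b - a‖ ≤ f b - f a := by
  have hmaps : MapsTo (AffineMap.lineMap a b) (Ioc (0 : ℝ) 1) s := fun r hr =>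
    hf.1.segment_subset ha hb (lineMap_mem_segment ℝ a b (Ioc_subset_Icc_self hr))
  have hderiv : HasDerivWithinAt (f ∘ AffineMap.lineMap a b) (f' (b - a)) (Ioc (0 : ℝ) 1) 0 := by
    refine HasFDerivWithinAt.comp_hasDerivWithinAt (t := s) (0 : ℝ) ?_
      AffineMap.hasDerivWithinAt_lineMap hmaps
    rwa [AffineMap.lineMap_apply_zero]
  rw [hasDerivWithinAt_iff_tendsto_slope' (by simp), nhdsWithin_Ioc_eq_nhdsGT zero_lt_one]
    at hderiv
  have hbound : Tendsto (fun r : ℝ => f b - f a - (1 - r) * ρ ‖b - a‖) (𝓝[>] 0)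
      (𝓝 (f b - f a - (1 - 0) * ρ ‖b - a‖)) :=
    (Continuous.tendsto (by fun_prop) 0).mono_left nhdsWithin_le_nhds
  have hslope : ∀ᶠ r in 𝓝[>] (0 : ℝ),
      slope (f ∘ AffineMap.lineMap a b) 0 r ≤ f b - f a - (1 - r) * ρ ‖b - a‖ := by
    filter_upwards [Ioc_mem_nhdsGT zero_lt_one] with r ⟨hr₀, hr₁⟩
    have hconv := hf.2 hb ha hr₀.le (sub_nonneg.2 hr₁) (add_sub_cancel r 1)
    rw [slope_def_field, sub_zero, div_le_iff₀ hr₀, Function.comp_apply, Function.comp_apply,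
      AffineMap.lineMap_apply_zero, AffineMap.lineMap_apply_module, add_comm (_ • a)]
    simp only [smul_eq_mul] at hconv
    linarith
  linarith [le_of_tendsto_of_tendsto hderiv hbound hslope]

theorem apply_sub_le_of_convexOn (hf : ConvexOn ℝ s f) (hf' : HasFDerivWithinAt f f' s a)
    (ha : a ∈ s) (hb : b ∈ s) : f' (b - a) ≤ f b - f a := by
  simpa using apply_sub_add_le_of_uniformConvexOn hf.uniformConvexOn_zero hf' ha hb

theorem le_apply_sub_of_concaveOn (hf : ConcaveOn ℝ s f) (hf' : HasFDerivWithinAt f f' s a)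
    (ha : a ∈ s) (hb : b ∈ s) : f b - f a ≤ f' (b - a) := by
  have h := apply_sub_le_of_convexOn hf.neg hf'.neg ha hb
  simp only [neg_apply, Pi.neg_apply] at h
  linarith

theorem apply_sub_nonneg_of_isMinOn (hs : Convex ℝ s) (hmin : IsMinOn f s a)
    (hf' : HasFDerivWithinAt f f' s a) (ha : a ∈ s) (hb : b ∈ s) : 0 ≤ f' (b - a) :=
  hmin.localize.hasFDerivWithinAt_nonneg hf'
    (sub_mem_posTangentConeAt_of_segment_subset (hs.segment_subset ha hb))

end Convexity

section Bregman

variable {E : Type*} [NormedAddCommGroup E] [NormedSpace ℝ E]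

/-- The Bregman divergence `D(p, c)` of `ψ`, used as the proximity term of mirror steps. The
derivative `ψ'` is a separate argument, so that it may be a derivative within a set. -/
def bregmanDiv (ψ : E → ℝ) (ψ' : E → E →L[ℝ] ℝ) (p c : E) : ℝ :=
  ψ p - ψ c - ψ' c (p - c)

variable {S : Set E} {ψ : E → ℝ} {ψ' : E → E →L[ℝ] ℝ} {m : ℝ} {c p : E}

theorem bregmanDiv_self (ψ : E → ℝ) (ψ' : E → E →L[ℝ] ℝ) (c : E) : bregmanDiv ψ ψ' c c = 0 := by
  simp [bregmanDiv]

theorem bregmanDiv_sub_sub (ψ : E → ℝ) (ψ' : E → E →L[ℝ] ℝ) (p u c : E) :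
    bregmanDiv ψ ψ' p c - bregmanDiv ψ ψ' p u - bregmanDiv ψ ψ' u c =
      (ψ' u - ψ' c) (p - u) := by
  simp only [bregmanDiv, sub_apply, map_sub]
  ring

theorem half_mul_norm_sub_sq_le_bregmanDiv (hψ : StrongConvexOn S m ψ)
    (hψ' : HasFDerivWithinAt ψ (ψ' c) S c) (hc : c ∈ S) (hp : p ∈ S) :
    m / 2 * ‖p - c‖ ^ 2 ≤ bregmanDiv ψ ψ' p c :=
  le_sub_iff_add_le'.2 (apply_sub_add_le_of_uniformConvexOn hψ hψ' hc hp)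

theorem bregmanDiv_nonneg (hψ : ConvexOn ℝ S ψ) (hψ' : HasFDerivWithinAt ψ (ψ' c) S c)
    (hc : c ∈ S) (hp : p ∈ S) : 0 ≤ bregmanDiv ψ ψ' p c :=
  sub_nonneg.2 (apply_sub_le_of_convexOn hψ hψ' hc hp)

end Bregman

section MirrorStep

variable {E : Type*} [NormedAddCommGroup E] [NormedSpace ℝ E]

/-- `u` is a mirror (prox) step over `S` from the centre `c` along the linear functional `g`: it
minimizes `g + D(·, c)` over `S`. -/
def IsMirrorStep (D : E → E → ℝ) (S : Set E) (g : E →L[ℝ] ℝ) (c u : E) : Prop :=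
  u ∈ S ∧ IsMinOn (fun p => g p + D p c) S u

variable {S : Set E} {ψ : E → ℝ} {ψ' : E → E →L[ℝ] ℝ} {m : ℝ} {g g₁ : E →L[ℝ] ℝ} {c u p : E}

theorem IsMirrorStep.apply_sub_le (hu : IsMirrorStep (bregmanDiv ψ ψ') S g c u)
    (hS : Convex ℝ S) (hψ' : HasFDerivWithinAt ψ (ψ' u) S u) (hp : p ∈ S) :
    g (u - p) ≤ bregmanDiv ψ ψ' p c - bregmanDiv ψ ψ' p u - bregmanDiv ψ ψ' u c := by
  have hderiv : HasFDerivWithinAt (fun p => g p + bregmanDiv ψ ψ' p c) (g + (ψ' u - ψ' c)) S u :=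
    g.hasFDerivWithinAt.add ((hψ'.sub_const (ψ c)).sub
      ((ψ' c).hasFDerivWithinAt.comp u ((hasFDerivWithinAt_id u S).sub_const c) (mapsTo_univ _ _)))
  have hopt := apply_sub_nonneg_of_isMinOn hS hu.2 hderiv hu.1 hp
  rw [bregmanDiv_sub_sub, ← neg_sub p u, map_neg]
  rw [add_apply] at hopt
  linarith

theorem IsMirrorStep.apply_sub_le_bregmanDiv (hu : IsMirrorStep (bregmanDiv ψ ψ') S g c u)
    (hψ : StrongConvexOn S m ψ) (hψ' : ∀ v ∈ S, HasFDerivWithinAt ψ (ψ' v) S v) (hm : 0 ≤ m)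
    (hg : ‖g₁ - g‖ ≤ m * ‖u - c‖) (hc : c ∈ S) (hp : p ∈ S) :
    g₁ (u - p) ≤ bregmanDiv ψ ψ' p c := by
  have hstep := hu.apply_sub_le hψ.1 (hψ' u hu.1) hp
  have hDu := half_mul_norm_sub_sq_le_bregmanDiv hψ (hψ' c hc) hc hu.1
  have hDp := half_mul_norm_sub_sq_le_bregmanDiv hψ (hψ' u hu.1) hu.1 hp
  rw [norm_sub_rev] at hDp
  have herror : (g₁ - g) (u - p) ≤ m / 2 * ‖u - c‖ ^ 2 + m / 2 * ‖u - p‖ ^ 2 :=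
    calc (g₁ - g) (u - p) ≤ ‖g₁ - g‖ * ‖u - p‖ := (le_abs_self _).trans ((g₁ - g).le_opNorm _)
      _ ≤ m * ‖u - c‖ * ‖u - p‖ := by gcongr
      _ = m / 2 * (2 * ‖u - c‖ * ‖u - p‖) := by ring
      _ ≤ m / 2 * (‖u - c‖ ^ 2 + ‖u - p‖ ^ 2) := by gcongr; exact two_mul_le_add_sq _ _
      _ = m / 2 * ‖u - c‖ ^ 2 + m / 2 * ‖u - p‖ ^ 2 := mul_add _ _ _
  rw [sub_apply] at herror
  linarith

end MirrorStep

theorem sum_Icc_mul_sub_succ_le {w a : ℕ → ℝ} {Ω : ℝ} (hw : MonotoneOn w (Ici 1)) (hw₁ : 0 ≤ w 1)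
    (ha : ∀ t, 1 ≤ t → a t ≤ Ω) {n : ℕ} (hn : 1 ≤ n) :
    ∑ t ∈ Finset.Icc 1 n, w t * (a t - a (t + 1)) ≤ w n * (Ω - a (n + 1)) := by
  induction n, hn using Nat.le_induction with
  | base =>
    rw [Finset.Icc_self, Finset.sum_singleton]
    gcongr
    exact ha 1 le_rfl
  | succ n hn ih =>
    have hmono : w n ≤ w (n + 1) := hw hn (Nat.le_succ_of_le hn) n.le_succ
    have ha' : 0 ≤ Ω - a (n + 1) := sub_nonneg.2 (ha _ (Nat.le_succ_of_le hn))
    rw [Finset.sum_Icc_succ_top (Nat.le_succ_of_le hn)]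
    linarith [mul_le_mul_of_nonneg_right hmono ha']

section MirrorProx

variable {E : Type*} [NormedAddCommGroup E] [NormedSpace ℝ E]

/-- `z` and `ztil` are the main and extrapolated iterates of Mirror Prox over `S` for the field `F`
with stepsizes `τ`. Indices start at `1`; the values at `0` are irrelevant. -/
structure IsMirrorProx (D : E → E → ℝ) (S : Set E) (F : E → E →L[ℝ] ℝ) (τ : ℕ → ℝ)
    (z ztil : ℕ → E) : Prop where
  init_mem : z 1 ∈ S
  extrapolate : ∀ t, 1 ≤ t → IsMirrorStep D S (τ t • F (z t)) (z t) (ztil t)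
  update : ∀ t, 1 ≤ t → IsMirrorStep D S (τ t • F (ztil t)) (z t) (z (t + 1))

namespace IsMirrorProx

variable {S : Set E} {F : E → E →L[ℝ] ℝ} {τ w : ℕ → ℝ} {z ztil : ℕ → E}

theorem mem {D : E → E → ℝ} (h : IsMirrorProx D S F τ z ztil) {t : ℕ} (ht : 1 ≤ t) : z t ∈ S := by
  induction t, ht using Nat.le_induction with
  | base => exact h.init_mem
  | succ t ht _ => exact (h.update t ht).1

variable {ψ : E → ℝ} {ψ' : E → E →L[ℝ] ℝ} {m : ℝ} {K : ℝ≥0}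

theorem apply_sub_le_bregmanDiv (h : IsMirrorProx (bregmanDiv ψ ψ') S F τ z ztil)
    (hψ : StrongConvexOn S m ψ) (hψ' : ∀ v ∈ S, HasFDerivWithinAt ψ (ψ' v) S v)
    (hF : LipschitzOnWith K F S) {t : ℕ} (ht : 1 ≤ t) (hτ : 0 ≤ τ t) (hτK : τ t * K ≤ m) :
    τ t * F (ztil t) (ztil t - z (t + 1)) ≤ bregmanDiv ψ ψ' (z (t + 1)) (z t) := by
  have hfield : ‖τ t • F (ztil t) - τ t • F (z t)‖ ≤ m * ‖ztil t - z t‖ :=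
    calc ‖τ t • F (ztil t) - τ t • F (z t)‖ = τ t * ‖F (ztil t) - F (z t)‖ := by
          rw [← norm_smul_of_nonneg hτ, smul_sub]
      _ ≤ τ t * (K * ‖ztil t - z t‖) := by
          gcongr
          exact hF.norm_sub_le (h.extrapolate t ht).1 (h.mem ht)
      _ = τ t * K * ‖ztil t - z t‖ := (mul_assoc _ _ _).symm
      _ ≤ m * ‖ztil t - z t‖ := by gcongr
  exact (h.extrapolate t ht).apply_sub_le_bregmanDiv hψ hψ' (le_trans (by positivity) hτK) hfield
    (h.mem ht) (h.update t ht).1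

theorem apply_sub_le_bregmanDiv_sub (h : IsMirrorProx (bregmanDiv ψ ψ') S F τ z ztil)
    (hψ : StrongConvexOn S m ψ) (hψ' : ∀ v ∈ S, HasFDerivWithinAt ψ (ψ' v) S v)
    (hF : LipschitzOnWith K F S) {t : ℕ} (ht : 1 ≤ t) (hτ : 0 ≤ τ t) (hτK : τ t * K ≤ m)
    {p : E} (hp : p ∈ S) :
    τ t * F (ztil t) (ztil t - p) ≤ bregmanDiv ψ ψ' p (z t) - bregmanDiv ψ ψ' p (z (t + 1)) := by
  have herror := h.apply_sub_le_bregmanDiv hψ hψ' hF ht hτ hτK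
  have hupdate := (h.update t ht).apply_sub_le hψ.1 (hψ' _ (h.update t ht).1) hp
  rw [smul_apply, smul_eq_mul] at hupdate
  rw [← sub_add_sub_cancel (ztil t) (z (t + 1)) p, map_add, mul_add]
  linarith

theorem sum_apply_sub_le (h : IsMirrorProx (bregmanDiv ψ ψ') S F τ z ztil)
    (hψ : StrongConvexOn S m ψ) (hψ' : ∀ v ∈ S, HasFDerivWithinAt ψ (ψ' v) S v)
    (hF : LipschitzOnWith K F S) (hτ : ∀ t, 1 ≤ t → 0 ≤ τ t) (hτK : ∀ t, 1 ≤ t → τ t * K ≤ m)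
    (hw : MonotoneOn w (Ici 1)) (hw₁ : 0 ≤ w 1) {p : E} (hp : p ∈ S) {Ω : ℝ}
    (hΩ : ∀ v ∈ S, bregmanDiv ψ ψ' p v ≤ Ω) {T : ℕ} (hT : 1 ≤ T) :
    ∑ t ∈ Finset.Icc 1 T, w t * τ t * F (ztil t) (ztil t - p) ≤ w T * Ω := by
  have hw₀ : ∀ t, 1 ≤ t → 0 ≤ w t := fun t ht => hw₁.trans (hw self_mem_Ici ht ht)
  have hm : 0 ≤ m := (mul_nonneg (hτ 1 le_rfl) K.2).trans (hτK 1 le_rfl)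
  have hψconv : ConvexOn ℝ S ψ := hψ.convexOn fun r => by positivity
  have hlast : 0 ≤ bregmanDiv ψ ψ' p (z (T + 1)) :=
    bregmanDiv_nonneg hψconv (hψ' _ (h.update T hT).1) (h.update T hT).1 hp
  calc ∑ t ∈ Finset.Icc 1 T, w t * τ t * F (ztil t) (ztil t - p)
      ≤ ∑ t ∈ Finset.Icc 1 T,
          w t * (bregmanDiv ψ ψ' p (z t) - bregmanDiv ψ ψ' p (z (t + 1))) := by
        refine Finset.sum_le_sum fun t ht => ?_
        have ht₁ := (Finset.mem_Icc.1 ht).1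
        rw [mul_assoc]
        exact mul_le_mul_of_nonneg_left
          (h.apply_sub_le_bregmanDiv_sub hψ hψ' hF ht₁ (hτ t ht₁) (hτK t ht₁) hp) (hw₀ t ht₁)
    _ ≤ w T * (Ω - bregmanDiv ψ ψ' p (z (T + 1))) :=
        sum_Icc_mul_sub_succ_le (a := fun t => bregmanDiv ψ ψ' p (z t)) hw hw₁
          (fun t ht => hΩ _ (h.mem ht)) hT
    _ ≤ w T * Ω := mul_le_mul_of_nonneg_left (sub_le_self _ hlast) (hw₀ T hT)

end IsMirrorProx

end MirrorProx

theorem sub_centerMass_le_centerMass_sub {X Y ι : Type*} [AddCommGroup X] [Module ℝ X]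
    [AddCommGroup Y] [Module ℝ Y] {SX : Set X} {SY : Set Y} {φ : X → Y → ℝ} {x : X} {y : Y}
    {s : Finset ι} {v : ι → ℝ} {p : ι → X × Y}
    (hφconv : ConvexOn ℝ SX fun x => φ x y) (hφconc : ConcaveOn ℝ SY fun y => φ x y)
    (hv : ∀ i ∈ s, 0 ≤ v i) (hv_sum : 0 < ∑ i ∈ s, v i) (hp : ∀ i ∈ s, p i ∈ SX ×ˢ SY) :
    φ (s.centerMass v p).1 y - φ x (s.centerMass v p).2 ≤
      s.centerMass v fun i => φ (p i).1 y - φ x (p i).2 := by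
  have hX := hφconv.map_centerMass_le hv hv_sum fun i hi => (hp i hi).1
  have hY := hφconc.le_map_centerMass hv hv_sum fun i hi => (hp i hi).2
  simp only [Finset.centerMass, Function.comp_def, Prod.smul_fst, Prod.smul_snd, Prod.fst_sum,
    Prod.snd_sum, smul_sub, Finset.sum_sub_distrib] at hX hY ⊢
  exact sub_le_sub hX hY

section SaddlePoint

variable {X Y : Type*} [NormedAddCommGroup X] [NormedSpace ℝ X]
  [NormedAddCommGroup Y] [NormedSpace ℝ Y]

/-- The gradient field `(∂φ/∂x, -∂φ/∂y)` of a saddle function with partial derivatives `φx'` and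
`φy'`, as a functional on the product space. -/
def saddleField (φx' : X × Y → X →L[ℝ] ℝ) (φy' : X × Y → Y →L[ℝ] ℝ) (z : X × Y) :
    X × Y →L[ℝ] ℝ :=
  (φx' z).coprod (-φy' z)

variable {SX : Set X} {SY : Set Y} {φ : X → Y → ℝ}
  {φx' : X × Y → X →L[ℝ] ℝ} {φy' : X × Y → Y →L[ℝ] ℝ} {x : X} {y : Y}

theorem sub_le_saddleField_apply_sub {z : X × Y} (hz : z ∈ SX ×ˢ SY)
    (hφconv : ConvexOn ℝ SX fun x => φ x z.2) (hφconc : ConcaveOn ℝ SY fun y => φ z.1 y)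
    (hφx' : HasFDerivWithinAt (fun x => φ x z.2) (φx' z) SX z.1)
    (hφy' : HasFDerivWithinAt (fun y => φ z.1 y) (φy' z) SY z.2) (hx : x ∈ SX) (hy : y ∈ SY) :
    φ z.1 y - φ x z.2 ≤ saddleField φx' φy' z (z - (x, y)) := by
  have hX := apply_sub_le_of_convexOn hφconv hφx' hz.1 hx
  have hY := le_apply_sub_of_concaveOn hφconc hφy' hz.2 hy
  simp only [saddleField, ContinuousLinearMap.coprod_apply, neg_apply, map_sub]
    at hX hY ⊢
  linarith

theorem IsMirrorProx.saddle_gap_centerMass_le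
    {ψ : X × Y → ℝ} {ψ' : X × Y → X × Y →L[ℝ] ℝ} {τ w : ℕ → ℝ} {z ztil : ℕ → X × Y}
    {m Ω : ℝ} {K : ℝ≥0}
    (h : IsMirrorProx (bregmanDiv ψ ψ') (SX ×ˢ SY) (saddleField φx' φy') τ z ztil)
    (hφconv : ∀ y ∈ SY, ConvexOn ℝ SX fun x => φ x y)
    (hφconc : ∀ x ∈ SX, ConcaveOn ℝ SY fun y => φ x y)
    (hφx' : ∀ v ∈ SX ×ˢ SY, HasFDerivWithinAt (fun x => φ x v.2) (φx' v) SX v.1)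
    (hφy' : ∀ v ∈ SX ×ˢ SY, HasFDerivWithinAt (fun y => φ v.1 y) (φy' v) SY v.2)
    (hψ : StrongConvexOn (SX ×ˢ SY) m ψ)
    (hψ' : ∀ v ∈ SX ×ˢ SY, HasFDerivWithinAt ψ (ψ' v) (SX ×ˢ SY) v)
    (hF : LipschitzOnWith K (saddleField φx' φy') (SX ×ˢ SY))
    (hτ : ∀ t, 1 ≤ t → 0 < τ t) (hτK : ∀ t, 1 ≤ t → τ t * K ≤ m)
    (hw : MonotoneOn w (Ici 1)) (hw₁ : 0 < w 1) (hx : x ∈ SX) (hy : y ∈ SY)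
    (hΩ : ∀ v ∈ SX ×ˢ SY, bregmanDiv ψ ψ' (x, y) v ≤ Ω) {T : ℕ} (hT : 1 ≤ T) :
    φ ((Finset.Icc 1 T).centerMass (fun t => w t * τ t) ztil).1 y -
        φ x ((Finset.Icc 1 T).centerMass (fun t => w t * τ t) ztil).2 ≤
      w T * Ω / ∑ t ∈ Finset.Icc 1 T, w t * τ t := by
  have hwτ : ∀ t ∈ Finset.Icc 1 T, 0 < w t * τ t := fun t ht =>
    have ht₁ := (Finset.mem_Icc.1 ht).1
    mul_pos (hw₁.trans_le (hw self_mem_Ici ht₁ ht₁)) (hτ t ht₁)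
  have hsum : 0 < ∑ t ∈ Finset.Icc 1 T, w t * τ t :=
    Finset.sum_pos hwτ (Finset.nonempty_Icc.2 hT)
  have hztil : ∀ t ∈ Finset.Icc 1 T, ztil t ∈ SX ×ˢ SY := fun t ht =>
    (h.extrapolate t (Finset.mem_Icc.1 ht).1).1
  have hregret := h.sum_apply_sub_le hψ hψ' hF (fun t ht => (hτ t ht).le) hτK hw hw₁.le
    (mk_mem_prod hx hy) hΩ hT
  refine (sub_centerMass_le_centerMass_sub (hφconv y hy) (hφconc x hx)
    (fun t ht => (hwτ t ht).le) hsum hztil).trans ?_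
  rw [Finset.centerMass, smul_eq_mul, inv_mul_eq_div]
  refine div_le_div_of_nonneg_right (le_trans ?_ hregret) hsum.le
  refine Finset.sum_le_sum fun t ht => mul_le_mul_of_nonneg_left ?_ (hwτ t ht).le
  have hmem := hztil t ht
  exact sub_le_saddleField_apply_sub hmem (hφconv _ hmem.2) (hφconc _ hmem.1) (hφx' _ hmem)
    (hφy' _ hmem) hx hy

end SaddlePoint

theorem rpow_add_one_le_mul_sum_Icc_rpow {q : ℝ} (hq : 0 ≤ q) (n : ℕ) :
    (n : ℝ) ^ (q + 1) ≤ (q + 1) * ∑ t ∈ Finset.Icc 1 n, (t : ℝ) ^ q := by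
  have hq₁ : 0 < q + 1 := by positivity
  have hmono : MonotoneOn (fun x : ℝ => x ^ q) (Icc ((0 : ℕ) : ℝ) n) := fun x hx _ _ hxy =>
    Real.rpow_le_rpow (by simpa using hx.1) hxy hq
  have hle := hmono.integral_le_sum_Ico n.zero_le
  rw [integral_rpow (Or.inl (by linarith)), Nat.cast_zero, Real.zero_rpow hq₁.ne', sub_zero,
    Finset.sum_Ico_add' (fun t : ℕ => (t : ℝ) ^ q) 0 n 1, zero_add,
    Finset.Ico_add_one_right_eq_Icc, div_le_iff₀' hq₁] at hle
  exact hle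

theorem rpow_mul_div_sum_le {q L Ω : ℝ} (hq : 0 ≤ q) (hL : 0 < L) (hΩ : 0 ≤ Ω) {n : ℕ}
    (hn : 1 ≤ n) :
    (n : ℝ) ^ q * Ω / ∑ t ∈ Finset.Icc 1 n, (t : ℝ) ^ q * (1 / L) ≤ (q + 1) * L * Ω / n := by
  have hn₀ : (0 : ℝ) < n := by exact_mod_cast hn
  have hsum : 0 < ∑ t ∈ Finset.Icc 1 n, (t : ℝ) ^ q :=
    Finset.sum_pos (fun t ht => Real.rpow_pos_of_pos (by exact_mod_cast (Finset.mem_Icc.1 ht).1) _)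
      (Finset.nonempty_Icc.2 hn)
  have hpow := rpow_add_one_le_mul_sum_Icc_rpow hq n
  rw [Real.rpow_add_one hn₀.ne'] at hpow
  rw [← Finset.sum_mul, mul_one_div, div_div_eq_mul_div, div_le_div_iff₀ hsum hn₀]
  calc (n : ℝ) ^ q * Ω * L * n = (n : ℝ) ^ q * n * (Ω * L) := by ring
    _ ≤ (q + 1) * (∑ t ∈ Finset.Icc 1 n, (t : ℝ) ^ q) * (Ω * L) := by gcongr
    _ = (q + 1) * L * Ω * ∑ t ∈ Finset.Icc 1 n, (t : ℝ) ^ q := by ring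

theorem stmt_8_general
    {X Y : Type*} [NormedAddCommGroup X] [NormedSpace ℝ X]
    [NormedAddCommGroup Y] [NormedSpace ℝ Y] {SX : Set X} {SY : Set Y} {φ : X → Y → ℝ}
    (hφconv : ∀ y ∈ SY, ConvexOn ℝ SX fun x => φ x y)
    (hφconc : ∀ x ∈ SX, ConcaveOn ℝ SY fun y => φ x y)
    {φx' : X × Y → X →L[ℝ] ℝ} {φy' : X × Y → Y →L[ℝ] ℝ}
    (hφx' : ∀ v ∈ SX ×ˢ SY, HasFDerivWithinAt (fun x => φ x v.2) (φx' v) SX v.1)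
    (hφy' : ∀ v ∈ SX ×ˢ SY, HasFDerivWithinAt (fun y => φ v.1 y) (φy' v) SY v.2)
    {ψ : X × Y → ℝ} {ψ' : X × Y → X × Y →L[ℝ] ℝ}
    (hψ' : ∀ v ∈ SX ×ˢ SY, HasFDerivWithinAt ψ (ψ' v) (SX ×ˢ SY) v)
    (hψ : StrongConvexOn (SX ×ˢ SY) 1 ψ)
    {Ω : ℝ} (hΩ : ∀ v ∈ SX ×ˢ SY, ∀ v' ∈ SX ×ˢ SY, bregmanDiv ψ ψ' v v' ≤ Ω)
    {L : ℝ} (hL : 0 < L)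
    (hF : ∀ v ∈ SX ×ˢ SY, ∀ v' ∈ SX ×ˢ SY,
      ‖saddleField φx' φy' v - saddleField φx' φy' v'‖ ≤ L * ‖v - v'‖)
    {q : ℝ} (hq : 0 ≤ q)
    {τ : ℕ → ℝ} (hτ : ∀ t, 1 ≤ t → τ t = 1 / L)
    {w : ℕ → ℝ} (hw : ∀ t : ℕ, 1 ≤ t → w t = (t : ℝ) ^ q)
    {z ztil : ℕ → X × Y}
    (h : IsMirrorProx (bregmanDiv ψ ψ') (SX ×ˢ SY) (saddleField φx' φy') τ z ztil) :
    (∀ t, 1 ≤ t → τ t * saddleField φx' φy' (ztil t) (ztil t - z (t + 1)) -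
      bregmanDiv ψ ψ' (z (t + 1)) (z t) ≤ 0) ∧
    ∀ T : ℕ, 1 ≤ T → ∀ x ∈ SX, ∀ y ∈ SY,
      φ ((Finset.Icc 1 T).centerMass (fun t => w t * τ t) ztil).1 y -
        φ x ((Finset.Icc 1 T).centerMass (fun t => w t * τ t) ztil).2 ≤ (q + 1) * L * Ω / T := by
  lift L to ℝ≥0 using hL.le
  have hLip : LipschitzOnWith L (saddleField φx' φy') (SX ×ˢ SY) :=
    .of_dist_le_mul (by simpa only [dist_eq_norm] using hF)
  have hτ_pos : ∀ t, 1 ≤ t → 0 < τ t := fun t ht => hτ t ht ▸ one_div_pos.2 hL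
  have hτL : ∀ t, 1 ≤ t → τ t * L ≤ 1 := fun t ht => by rw [hτ t ht, one_div_mul_cancel hL.ne']
  refine ⟨fun t ht => sub_nonpos.2
    (h.apply_sub_le_bregmanDiv hψ hψ' hLip ht (hτ_pos t ht).le (hτL t ht)), ?_⟩
  intro T hT x hx y hy
  have hw_mono : MonotoneOn w (Ici 1) := fun s hs t ht hst => by
    rw [hw s hs, hw t ht]
    exact Real.rpow_le_rpow s.cast_nonneg (Nat.cast_le.2 hst) hq
  have hΩ₀ : 0 ≤ Ω := (bregmanDiv_self ψ ψ' (z 1)).symm.le.trans (hΩ _ h.init_mem _ h.init_mem)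
  have hgap := h.saddle_gap_centerMass_le hφconv hφconc hφx' hφy' hψ hψ' hLip hτ_pos hτL hw_mono
    (by simp [hw 1 le_rfl]) hx hy (hΩ _ (mk_mem_prod hx hy)) hT
  rw [hw T hT, Finset.sum_congr rfl fun t ht => by
    rw [hw t (Finset.mem_Icc.1 ht).1, hτ t (Finset.mem_Icc.1 ht).1]] at hgap
  exact hgap.trans (rpow_mul_div_sum_le hq hL hΩ₀ hT)

/-- Weighted-average guarantee for Mirror Prox with constant stepsizes `τ_t = 1/L` and
weights `w_t = t^q`: each `δ_t ≤ 0` and the gap of the weighted averages is at most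
`(q+1)LΩ/T`. -/
theorem stmt_8
    {X Y : Type*} [NormedAddCommGroup X] [NormedSpace ℝ X] [FiniteDimensional ℝ X]
    [NormedAddCommGroup Y] [NormedSpace ℝ Y] [FiniteDimensional ℝ Y]
    (SX : Set X) (SY : Set Y)
    (hSXne : SX.Nonempty) (hSXcl : IsClosed SX) (hSXconv : Convex ℝ SX)
    (hSYne : SY.Nonempty) (hSYcl : IsClosed SY) (hSYconv : Convex ℝ SY)
    (φ : X → Y → ℝ)
    (hφconv : ∀ y ∈ SY, ConvexOn ℝ SX (fun x => φ x y))
    (hφconc : ∀ x ∈ SX, ConcaveOn ℝ SY (fun y => φ x y))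
    (φx' : X × Y → X →L[ℝ] ℝ) (φy' : X × Y → Y →L[ℝ] ℝ)
    (hφx' : ∀ z : X × Y, HasFDerivAt (fun x => φ x z.2) (φx' z) z.1)
    (hφy' : ∀ z : X × Y, HasFDerivAt (fun y => φ z.1 y) (φy' z) z.2)
    (F : X × Y → (X × Y) →L[ℝ] ℝ)
    (hF : ∀ z w : X × Y, F z w = φx' z w.1 - φy' z w.2)
    (ψ : X × Y → ℝ) (ψ' : X × Y → (X × Y) →L[ℝ] ℝ)
    (hψd : ∀ z, HasFDerivAt ψ (ψ' z) z)
    (hψsc : ∀ (v v' : X × Y) (l : ℝ), 0 ≤ l → l ≤ 1 →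
      ψ (l • v + (1 - l) • v') ≤
        l * ψ v + (1 - l) * ψ v' - 1 / 2 * l * (1 - l) * ‖v - v'‖ ^ 2)
    (D : X × Y → X × Y → ℝ) (hD : ∀ p z, D p z = ψ p - ψ z - ψ' z (p - z))
    (Ω : ℝ) (hΩ : ∀ z ∈ SX ×ˢ SY, ∀ z' ∈ SX ×ˢ SY, D z z' ≤ Ω)
    -- F is Lc-Lipschitz on 𝒵 (operator norm = dual norm)
    (Lc : ℝ) (hLc : 0 < Lc)
    (hFLip : ∀ z ∈ SX ×ˢ SY, ∀ z' ∈ SX ×ˢ SY, ‖F z - F z'‖ ≤ Lc * ‖z - z'‖)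
    -- constant stepsizes and polynomial weights
    (q : ℝ) (hq : 0 ≤ q)
    (τs : ℕ → ℝ) (hτs : ∀ t : ℕ, 1 ≤ t → τs t = 1 / Lc)
    (w : ℕ → ℝ) (hw : ∀ t : ℕ, 1 ≤ t → w t = (t : ℝ) ^ q)
    -- the Mirror Prox iterates
    (z : ℕ → X × Y) (ztil : ℕ → X × Y)
    (hz1 : z 1 ∈ SX ×ˢ SY)
    (hztil : ∀ t : ℕ, 1 ≤ t → ztil t ∈ SX ×ˢ SY ∧ ∀ p ∈ SX ×ˢ SY,
      τs t * F (z t) (ztil t) + D (ztil t) (z t) ≤ τs t * F (z t) p + D p (z t))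
    (hznext : ∀ t : ℕ, 1 ≤ t → z (t + 1) ∈ SX ×ˢ SY ∧ ∀ p ∈ SX ×ˢ SY,
      τs t * F (ztil t) (z (t + 1)) + D (z (t + 1)) (z t) ≤
        τs t * F (ztil t) p + D p (z t))
    (δ : ℕ → ℝ)
    (hδ : ∀ t : ℕ, 1 ≤ t →
      δ t = τs t * F (ztil t) (ztil t - z (t + 1)) - D (z (t + 1)) (z t)) :
    (∀ t : ℕ, 1 ≤ t → δ t ≤ 0) ∧
    (∀ T : ℕ, 1 ≤ T → ∀ x ∈ SX, ∀ y ∈ SY,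
      φ ((1 / ∑ t ∈ Finset.Icc 1 T, w t * τs t) •
            ∑ t ∈ Finset.Icc 1 T, (w t * τs t) • ztil t).1 y -
          φ x ((1 / ∑ t ∈ Finset.Icc 1 T, w t * τs t) •
            ∑ t ∈ Finset.Icc 1 T, (w t * τs t) • ztil t).2 ≤
        (q + 1) * Lc * Ω / (T : ℝ)) := by
  obtain rfl : D = bregmanDiv ψ ψ' := funext₂ hD
  obtain rfl : F = saddleField φx' φy' := by ext v <;> simp [hF, saddleField]
  have hmain := stmt_8_general hφconv hφconc (fun v _ => (hφx' v).hasFDerivWithinAt)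
    (fun v _ => (hφy' v).hasFDerivWithinAt) (fun v _ => (hψd v).hasFDerivWithinAt)
    (strongConvexOn_of_forall_segment (hSXconv.prod hSYconv) fun v _ v' _ => hψsc v v')
    hΩ hLc hFLip hq hτs hw ⟨hz1, hztil, hznext⟩
  exact ⟨fun t ht => (hδ t ht).trans_le (hmain.1 t ht),
    by simpa only [Finset.centerMass, one_div] using hmain.2⟩
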